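/- arXiv:2102.07103 — 2 statements merged into one kernel-verified Lean document; each statement's English description precedes it below -/
import Mathlib

section
/- Let n ≥ 2, r > 0, let E ⊆ ℝⁿ be a compact set contained in the closed ball B̄_r of radius r centered at the origin, and let U be a relatively open subset of the sphere ∂B̄_r = {x : |x| = r} with U ∩ E = ∅. Then for every unit vector u, the Steiner symmetrization S_u E satisfies S_u E ∩ U = ∅ and S_u E ∩ σ_u(U) = ∅. -/
open MeasureTheory Filter Metric

/-- Orthogonal projection of `ℝⁿ` onto the hyperplane `u^⊥` through the origin. -/
noncomputable def steinerProj {n : ℕ} (u : EuclideanSpace ℝ (Fin n)) :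
    EuclideanSpace ℝ (Fin n) → EuclideanSpace ℝ (Fin n) :=
  fun z => ((Submodule.orthogonalProjectionOnto (Submodule.span ℝ {u})ᗮ) z : EuclideanSpace ℝ (Fin n))

/-- `ℓ_{E,u}(x')` : the one-dimensional Lebesgue measure of `{t : x' + t u ∈ E}`. -/
noncomputable def steinerLen {n : ℕ} (u : EuclideanSpace ℝ (Fin n))
    (E : Set (EuclideanSpace ℝ (Fin n))) (x' : EuclideanSpace ℝ (Fin n)) : ℝ :=
  (volume {t : ℝ | x' + t • u ∈ E}).toReal

/-- Steiner symmetrization of `E` about the hyperplane `u^⊥`: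
`S_u E = {x' + t u : x' ∈ π_u(E), |t| ≤ ℓ_{E,u}(x')/2}`. -/
noncomputable def steiner {n : ℕ} (u : EuclideanSpace ℝ (Fin n))
    (E : Set (EuclideanSpace ℝ (Fin n))) : Set (EuclideanSpace ℝ (Fin n)) :=
  {x | ∃ x' ∈ steinerProj u '' E, ∃ t : ℝ, |t| ≤ steinerLen u E x' / 2 ∧ x = x' + t • u}

/-- The last standard basis vector `e_n` of `ℝⁿ` (junk value `0` if `n = 0`). -/
noncomputable def lastDir (n : ℕ) : EuclideanSpace ℝ (Fin n) :=
  if h : n = 0 then 0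
  else EuclideanSpace.single ⟨n - 1, Nat.sub_lt (Nat.pos_of_ne_zero h) one_pos⟩ 1

/-- `max_{x ∈ E} |x|` for a (nonempty compact) set `E ⊆ ℝⁿ`. -/
noncomputable def maxNorm {n : ℕ} (E : Set (EuclideanSpace ℝ (Fin n))) : ℝ :=
  sSup ((fun x => ‖x‖) '' E)

/-- Reflection `σ_v(x) = x - 2(x·v)v` of `ℝⁿ` across the hyperplane `v^⊥`. -/
noncomputable def reflHyp {n : ℕ} (v : EuclideanSpace ℝ (Fin n))
    (x : EuclideanSpace ℝ (Fin n)) : EuclideanSpace ℝ (Fin n) :=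
  x - (2 * (inner ℝ x v : ℝ)) • v

/-! Let `x = y + t • u` with `y ⊥ u` be a point of the sphere. The line through `x` in the direction
`u` meets the ball in the chord `|s| ≤ |t|`, of length `2 |t|`. If `x ∈ S_u E`, the section of `E`
along this line is a closed subset of the chord with length at least `2 |t|`, so it is the whole
chord and `x ∈ E` already. Hence `S_u E` meets the sphere only in points of `E`, and it misses
`σ_u(U)` because it is `σ_u`-invariant. -/

lemma eq_of_isClosed_of_subset_of_measure_le {X : Type*} [TopologicalSpace X] [MeasurableSpace X]
    [OpensMeasurableSpace X] {μ : Measure X} [μ.IsOpenPosMeasure] {A K : Set X} (hA : IsClosed A)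
    (hAK : A ⊆ K) (hK : K ⊆ closure (interior K)) (hKfin : μ K ≠ ⊤) (hμ : μ K ≤ μ A) : A = K := by
  have hdiff : μ (K \ A) = 0 :=
    ae_le_set.1 (ae_eq_of_subset_of_measure_ge hAK hμ hA.nullMeasurableSet hKfin).symm.le
  have hempty : interior K \ A = ∅ :=
    (isOpen_interior.sdiff hA).eq_empty_of_measure_zero
      (measure_mono_null (Set.sdiff_subset_sdiff_left interior_subset) hdiff)
  exact hAK.antisymm (hK.trans (closure_minimal (Set.sdiff_eq_empty.1 hempty) hA))

lemma eq_Icc_of_isClosed_of_le_volume_real {A : Set ℝ} {a b : ℝ} (hA : IsClosed A)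
    (hne : A.Nonempty) (hsub : A ⊆ Set.Icc a b) (hvol : b - a ≤ volume.real A) :
    A = Set.Icc a b := by
  obtain rfl | hab := (Set.nonempty_Icc.1 (hne.mono hsub)).eq_or_lt
  · rw [Set.Icc_self] at hsub ⊢
    exact hne.subset_singleton_iff.1 hsub
  · refine eq_of_isClosed_of_subset_of_measure_le (μ := volume) hA hsub ?_ (by simp) ?_
    · rw [interior_Icc, closure_Ioo hab.ne]
    · rw [Real.volume_Icc]
      exact ENNReal.ofReal_le_of_le_toReal hvol

lemma norm_add_smul_le_norm_add_smul_iff {V : Type*} [NormedAddCommGroup V]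
    [InnerProductSpace ℝ V] {u x : V} (hu : u ≠ 0) (hx : inner ℝ x u = 0) {s t : ℝ} :
    ‖x + s • u‖ ≤ ‖x + t • u‖ ↔ |s| ≤ |t| := by
  have pythagoras (c : ℝ) : ‖x + c • u‖ * ‖x + c • u‖ = ‖x‖ * ‖x‖ + ‖c • u‖ * ‖c • u‖ :=
    norm_add_sq_eq_norm_sq_add_norm_sq_real (by rw [real_inner_smul_right, hx, mul_zero])
  rw [mul_self_le_mul_self_iff (norm_nonneg _) (norm_nonneg _), pythagoras, pythagoras,
    add_le_add_iff_left, ← mul_self_le_mul_self_iff (norm_nonneg _) (norm_nonneg _), norm_smul,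
    norm_smul, mul_le_mul_iff_left₀ (norm_pos_iff.2 hu), Real.norm_eq_abs, Real.norm_eq_abs]

section Steiner

variable {n : ℕ} {u x : EuclideanSpace ℝ (Fin n)} {E U : Set (EuclideanSpace ℝ (Fin n))} {r : ℝ}

lemma steinerProj_mem_orthogonal (u z : EuclideanSpace ℝ (Fin n)) :
    steinerProj u z ∈ (Submodule.span ℝ {u})ᗮ :=
  Submodule.starProjection_apply_mem _ z

lemma exists_steinerProj_add_smul_eq (u z : EuclideanSpace ℝ (Fin n)) :
    ∃ s : ℝ, steinerProj u z + s • u = z := by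
  obtain ⟨s, hs⟩ := Submodule.mem_span_singleton.1
    (Submodule.starProjection_apply_mem (Submodule.span ℝ {u}) z)
  refine ⟨s, ?_⟩
  rw [hs, add_comm]
  exact Submodule.starProjection_add_starProjection_orthogonal z

lemma steiner_inter_sphere_subset (hE : IsClosed E) (hEr : E ⊆ closedBall 0 r) (hu : u ≠ 0) :
    steiner u E ∩ sphere 0 r ⊆ E := by
  rintro _ ⟨⟨_, ⟨z, hz, rfl⟩, t, ht, rfl⟩, hr⟩
  set A : Set ℝ := {s | steinerProj u z + s • u ∈ E}
  have horth : inner ℝ (steinerProj u z) u = 0 :=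
    Submodule.mem_orthogonal_singleton_iff_inner_left.1 (steinerProj_mem_orthogonal u z)
  have hclosed : IsClosed A := hE.preimage (by fun_prop)
  have hne : A.Nonempty :=
    (exists_steinerProj_add_smul_eq u z).imp fun s hs => by rwa [Set.mem_ofPred_eq, hs]
  have hchord : A ⊆ Set.Icc (-|t|) |t| := fun s hs => by
    rw [Set.mem_Icc, ← abs_le, ← norm_add_smul_le_norm_add_smul_iff hu horth,
      mem_sphere_zero_iff_norm.1 hr]
    exact mem_closedBall_zero_iff.1 (hEr hs)
  have hlen : |t| - -|t| ≤ volume.real A := by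
    change |t| ≤ volume.real A / 2 at ht
    linarith
  have htA : t ∈ A := by
    rw [eq_Icc_of_isClosed_of_le_volume_real hclosed hne hchord hlen]
    exact abs_le.1 le_rfl
  exact htA

lemma reflHyp_eq_reflection (hu : ‖u‖ = 1) :
    reflHyp u = (Submodule.span ℝ {u})ᗮ.reflection := by
  ext1 x
  rw [Submodule.reflection_orthogonal_apply, Submodule.reflection_singleton_apply, hu,
    real_inner_comm, reflHyp]
  simp only [RCLike.ofReal_one]
  module

lemma reflHyp_involutive (hu : ‖u‖ = 1) : Function.Involutive (reflHyp u) := by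
  rw [reflHyp_eq_reflection hu]
  exact Submodule.reflection_involutive _

lemma reflHyp_add_smul (hu : ‖u‖ = 1) (hx : x ∈ (Submodule.span ℝ {u})ᗮ) (t : ℝ) :
    reflHyp u (x + t • u) = x + (-t) • u := by
  rw [reflHyp_eq_reflection hu, map_add, map_smul, Submodule.reflection_mem_subspace_eq_self hx,
    Submodule.reflection_orthogonalComplement_singleton_eq_neg, smul_neg, neg_smul]

lemma mapsTo_reflHyp_steiner (hu : ‖u‖ = 1) (E : Set (EuclideanSpace ℝ (Fin n))) :
    Set.MapsTo (reflHyp u) (steiner u E) (steiner u E) := by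
  rintro _ ⟨_, ⟨z, hz, rfl⟩, t, ht, rfl⟩
  exact ⟨_, ⟨z, hz, rfl⟩, -t, by rwa [abs_neg],
    reflHyp_add_smul hu (steinerProj_mem_orthogonal u z) t⟩

lemma image_reflHyp_steiner (hu : ‖u‖ = 1) (E : Set (EuclideanSpace ℝ (Fin n))) :
    reflHyp u '' steiner u E = steiner u E :=
  (mapsTo_reflHyp_steiner hu E).image_subset.antisymm fun x hx =>
    ⟨reflHyp u x, mapsTo_reflHyp_steiner hu E hx, reflHyp_involutive hu x⟩

theorem stmt9_general (hE : IsClosed E) (hEr : E ⊆ closedBall 0 r) (hUr : U ⊆ sphere 0 r)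
    (hUE : U ∩ E = ∅) (hu : ‖u‖ = 1) :
    steiner u E ∩ U = ∅ ∧ steiner u E ∩ (reflHyp u '' U) = ∅ := by
  have hu₀ : u ≠ 0 := norm_ne_zero_iff.1 (hu ▸ one_ne_zero)
  have hSU : steiner u E ∩ U = ∅ := Set.eq_empty_iff_forall_notMem.2 fun x ⟨hxS, hxU⟩ =>
    Set.eq_empty_iff_forall_notMem.1 hUE x
      ⟨hxU, steiner_inter_sphere_subset hE hEr hu₀ ⟨hxS, hUr hxU⟩⟩
  refine ⟨hSU, ?_⟩
  calc steiner u E ∩ (reflHyp u '' U)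
      = reflHyp u '' steiner u E ∩ reflHyp u '' U := by rw [image_reflHyp_steiner hu]
    _ = reflHyp u '' (steiner u E ∩ U) := (Set.image_inter (reflHyp_involutive hu).injective).symm
    _ = ∅ := by rw [hSU, Set.image_empty]

end Steiner

/-- If a compact set `E ⊆ B̄_r` misses a relatively open subset `U` of the sphere `∂B̄_r`,
then for every unit vector `u` the Steiner symmetrization `S_u E` misses both `U` and the
reflected cap `σ_u(U)`. -/
theorem stmt9 (n : ℕ) (hn : 2 ≤ n) (r : ℝ) (hr : 0 < r)
    (E : Set (EuclideanSpace ℝ (Fin n))) (hE : IsCompact E)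
    (hEsub : E ⊆ closedBall (0 : EuclideanSpace ℝ (Fin n)) r)
    (U : Set (EuclideanSpace ℝ (Fin n)))
    (hUopen : ∃ V : Set (EuclideanSpace ℝ (Fin n)),
      IsOpen V ∧ U = V ∩ sphere (0 : EuclideanSpace ℝ (Fin n)) r)
    (hUE : U ∩ E = ∅) :
    ∀ u : EuclideanSpace ℝ (Fin n), ‖u‖ = 1 →
      steiner u E ∩ U = ∅ ∧ steiner u E ∩ (reflHyp u '' U) = ∅ := by
  obtain ⟨V, -, rfl⟩ := hUopen
  exact fun u hu => stmt9_general hE.isClosed hEsub Set.inter_subset_right hUE hu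
end

section
/- Let n ≥ 2, let E ⊆ ℝⁿ be a compact set and u a unit vector. Then the Steiner symmetrization S_u E is a compact subset of ℝⁿ. -/
open MeasureTheory Filter Metric

/-! The length of the sections of a compact set by parallel lines is upper semicontinuous: sections
by nearby lines lie in a small open neighbourhood of the given one, which outer regularity makes
almost as short. Over the compact projection of the set, the region between the graphs of minus and
plus half that length is therefore compact, and the symmetrization is its image under the map
`(x', t) ↦ x' + t • u`. -/

open scoped ENNReal Pointwise

section Topology

variable {X : Type*} [TopologicalSpace X]

theorem upperHemicontinuous_setOf_add_mem [AddGroup X] [IsTopologicalAddGroup X] {T : Type*}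
    [TopologicalSpace T] {E : Set X} {i : T → X} (hE : IsCompact E) (hi : IsClosedMap i) :
    UpperHemicontinuous fun x ↦ {t | x + i t ∈ E} := by
  rw [upperHemicontinuous_iff_isClosed_compl_preimage_Iic_compl]
  intro F hF
  have hmeets : ((fun x ↦ {t | x + i t ∈ E}) ⁻¹' Set.Iic Fᶜ)ᶜ = E + -(i '' F) := by
    ext x
    constructor
    · intro hx
      obtain ⟨t, ht, htF⟩ := Set.not_subset.1 hx
      exact ⟨x + i t, ht, -i t, Set.neg_mem_neg.2 ⟨t, not_not.1 htF, rfl⟩, by simp⟩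
    · rintro ⟨e, he, _, ⟨t, htF, hit⟩, rfl⟩ hsub
      exact hsub (by simpa [hit] using he) htF
  rw [hmeets]
  exact (hi F hF).neg.add_left_of_isCompact hE

theorem upperSemicontinuous_measure_of_upperHemicontinuous {Y : Type*} [TopologicalSpace Y]
    [MeasurableSpace Y] (μ : Measure Y) [μ.OuterRegular] {S : X → Set Y}
    (hS : UpperHemicontinuous S) : UpperSemicontinuous fun x ↦ μ (S x) := by
  intro x c hc
  obtain ⟨U, hxU, hU, hUc⟩ := (S x).exists_isOpen_lt_of_lt c hc
  filter_upwards [upperHemicontinuous_iff_forall_isOpen.1 hS x U hU hxU] with y hy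
  exact (measure_mono hy).trans_lt hUc

theorem upperSemicontinuous_toReal {f : X → ℝ≥0∞} (hf : UpperSemicontinuous f)
    (hfin : ∀ x, f x ≠ ∞) : UpperSemicontinuous fun x ↦ (f x).toReal := by
  intro x c hc
  filter_upwards [hf x _ ((ENNReal.lt_ofReal_iff_toReal_lt (hfin x)).2 hc)] with y hy
  exact (ENNReal.lt_ofReal_iff_toReal_lt (hfin y)).1 hy

theorem isCompact_setOf_norm_le {W : Type*} [SeminormedAddCommGroup W] [ProperSpace W]
    {K : Set X} {f : X → ℝ} (hK : IsCompact K) (hf : UpperSemicontinuousOn f K) :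
    IsCompact {p : X × W | p.1 ∈ K ∧ ‖p.2‖ ≤ f p.1} := by
  obtain ⟨C, hC⟩ := hf.bddAbove_of_isCompact hK
  have hf_fst : UpperSemicontinuousOn (fun p : X × W ↦ f p.1) (K ×ˢ closedBall 0 C) :=
    hf.comp continuousOn_fst fun _ hp ↦ hp.1
  have hnorm : Continuous fun p : X × W ↦ -‖p.2‖ := by fun_prop
  have hdiff : UpperSemicontinuousOn (fun p : X × W ↦ f p.1 + -‖p.2‖) (K ×ˢ closedBall 0 C) :=
    hf_fst.add (hnorm.upperSemicontinuous.upperSemicontinuousOn _)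
  convert hdiff.isCompact_inter_preimage_Ici (hK.prod (isCompact_closedBall 0 C)) 0 using 1
  ext ⟨x, w⟩
  have hfC : x ∈ K → f x ≤ C := fun hx ↦ hC (Set.mem_image_of_mem f hx)
  simp only [Set.mem_ofPred_eq, Set.mem_inter_iff, Set.mem_prod, mem_closedBall_zero_iff,
    Set.mem_preimage, Set.mem_Ici]
  grind

end Topology

section LineSymmetrization

variable {V : Type*} [AddCommGroup V] [Module ℝ V]

/-- The section of `E` by the line through `x` with direction `u`, parametrized by `ℝ`. -/
def lineSection (u : V) (E : Set V) (x : V) : Set ℝ :=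
  {t | x + t • u ∈ E}

/-- The symmetrization of `E` in the direction `u` over the base `B`: the section of `E` by the line
through each `x' ∈ B` is replaced by a segment centred at `x'`, whose half-length is half the
`μ`-measure of the section. It is Steiner symmetrization about `u^⊥` when `B = π_u(E)` and `μ` is
Lebesgue measure. -/
def lineSymmetrization (μ : Measure ℝ) (u : V) (B E : Set V) : Set V :=
  {x | ∃ x' ∈ B, ∃ t : ℝ, |t| ≤ μ.real (lineSection u E x') / 2 ∧ x = x' + t • u}

theorem lineSymmetrization_eq_image (μ : Measure ℝ) (u : V) (B E : Set V) :
    lineSymmetrization μ u B E = (fun p : V × ℝ ↦ p.1 + p.2 • u) ''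
      {p | p.1 ∈ B ∧ ‖p.2‖ ≤ μ.real (lineSection u E p.1) / 2} := by
  ext x
  simp [lineSymmetrization, and_assoc, eq_comm]

variable [TopologicalSpace V] [IsTopologicalAddGroup V] [ContinuousSMul ℝ V] [T2Space V]
  {u : V} {B E : Set V}

theorem isCompact_lineSection (hu : u ≠ 0) (hE : IsCompact E) (x : V) :
    IsCompact (lineSection u E x) :=
  ((Homeomorph.addLeft x).isClosedEmbedding.comp
    (isClosedEmbedding_smul_left hu)).isCompact_preimage hE

theorem upperSemicontinuous_measureReal_lineSection (μ : Measure ℝ) [IsLocallyFiniteMeasure μ]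
    (hu : u ≠ 0) (hE : IsCompact E) :
    UpperSemicontinuous fun x ↦ μ.real (lineSection u E x) :=
  upperSemicontinuous_toReal
    (upperSemicontinuous_measure_of_upperHemicontinuous μ
      (upperHemicontinuous_setOf_add_mem hE (isClosedMap_smul_left u)))
    fun x ↦ (isCompact_lineSection hu hE x).measure_ne_top

theorem stmt13_general (μ : Measure ℝ) [IsLocallyFiniteMeasure μ] (hu : u ≠ 0)
    (hB : IsCompact B) (hE : IsCompact E) : IsCompact (lineSymmetrization μ u B E) := by
  have hhalf : UpperSemicontinuous fun x ↦ μ.real (lineSection u E x) / 2 :=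
    (continuous_id.div_const 2).comp_upperSemicontinuous
      (upperSemicontinuous_measureReal_lineSection μ hu hE)
      fun _ _ h ↦ div_le_div_of_nonneg_right h zero_le_two
  rw [lineSymmetrization_eq_image]
  exact (isCompact_setOf_norm_le hB (hhalf.upperSemicontinuousOn B)).image (by fun_prop)

end LineSymmetrization

theorem continuous_steinerProj {n : ℕ} (u : EuclideanSpace ℝ (Fin n)) :
    Continuous (steinerProj u) := by
  unfold steinerProj
  fun_prop

/-- The Steiner symmetrization of a compact set is compact. -/
theorem stmt13 (n : ℕ) (hn : 2 ≤ n) (E : Set (EuclideanSpace ℝ (Fin n)))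
    (hE : IsCompact E) (u : EuclideanSpace ℝ (Fin n)) (hu : ‖u‖ = 1) :
    IsCompact (steiner u E) :=
  stmt13_general volume (ne_zero_of_norm_ne_zero (hu ▸ one_ne_zero))
    (hE.image (continuous_steinerProj u)) hE
end
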